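/- (Proposition 5) The map on generators sending η_k ↦ η_{k+1} and ε_k ↦ ε_{k+1} induces a well-defined monoid homomorphism f : F₀ →* F₀ (i.e. the shift endomorphism of F descends through the congruence generated by R₀), and in F₀, with η := π(η_0) and ε := π(ε_0), the identities hold: ε * η = 1; ε * f(η) = 1; ε * f(ε) = ε * ε; ε * f(f(x)) = f(x) * ε for all x ∈ F₀; and f(x) * η = η * x for all x ∈ F₀. -/

import Mathlib

/-- The free monoid on the generators `η_k` and `ε_k` (`k ∈ ℕ`). -/
abbrev FreeAdj := FreeMonoid (Bool × ℕ)

/-- The generator `η_k`. -/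
def ηgen (k : ℕ) : FreeAdj := FreeMonoid.of (true, k)

/-- The generator `ε_k`. -/
def εgen (k : ℕ) : FreeAdj := FreeMonoid.of (false, k)

/-- The set of relation pairs `R₀`. -/
inductive R0 : FreeAdj → FreeAdj → Prop
  | ee {i j : ℕ} (h : i < j) : R0 (εgen i * εgen j) (εgen (j - 1) * εgen i)
  | hh {i j : ℕ} (h : i < j) : R0 (ηgen j * ηgen i) (ηgen i * ηgen (j - 1))
  | eh_gt {i j : ℕ} (h : i + 1 < j) : R0 (εgen i * ηgen j) (ηgen (j - 1) * εgen i)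
  | eh_lt {i j : ℕ} (h : j < i) : R0 (εgen i * ηgen j) (ηgen j * εgen (i - 1))
  | eh_eq {i : ℕ} (h : 0 < i) : R0 (εgen i * ηgen i) (εgen (i - 1) * ηgen i)
  | eh_succ (i : ℕ) : R0 (εgen i * ηgen (i + 1)) (εgen i * ηgen i)
  | eh_zero : R0 (εgen 0 * ηgen 0) 1

/-- The monoid `F₀`: the quotient of the free monoid by the congruence
generated by `R₀`. -/
abbrev F0 := (conGen R0).Quotient

/-- The quotient map `π : F →* F₀`. -/
def πmap : FreeAdj →* F0 := (conGen R0).mk'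

theorem πmap_rel {a b : FreeAdj} (h : R0 a b) : πmap a = πmap b :=
  (Con.eq _).2 (ConGen.Rel.of _ _ h)

/-- The shift on the free monoid, composed with `πmap`. -/
def shiftπ : FreeAdj →* F0 :=
  FreeMonoid.lift (fun p : Bool × ℕ => πmap (FreeMonoid.of (p.1, p.2 + 1)))

theorem shiftπ_η (k : ℕ) : shiftπ (ηgen k) = πmap (ηgen (k + 1)) := by
  simp [shiftπ, ηgen]

theorem shiftπ_ε (k : ℕ) : shiftπ (εgen k) = πmap (εgen (k + 1)) := by
  simp [shiftπ, εgen]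

theorem shiftπ_rel {a b : FreeAdj} (h : R0 a b) : shiftπ a = shiftπ b := by
  induction h with
  | @ee i j h =>
    obtain ⟨j, rfl⟩ : ∃ m, j = m + 1 := ⟨j - 1, by omega⟩
    simpa [shiftπ_η, shiftπ_ε] using πmap_rel (R0.ee (i := i + 1) (j := j + 2) (by omega))
  | @hh i j h =>
    obtain ⟨j, rfl⟩ : ∃ m, j = m + 1 := ⟨j - 1, by omega⟩
    simpa [shiftπ_η, shiftπ_ε] using πmap_rel (R0.hh (i := i + 1) (j := j + 2) (by omega))
  | @eh_gt i j h =>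
    obtain ⟨j, rfl⟩ : ∃ m, j = m + 1 := ⟨j - 1, by omega⟩
    simpa [shiftπ_η, shiftπ_ε] using πmap_rel (R0.eh_gt (i := i + 1) (j := j + 2) (by omega))
  | @eh_lt i j h =>
    obtain ⟨i, rfl⟩ : ∃ m, i = m + 1 := ⟨i - 1, by omega⟩
    simpa [shiftπ_η, shiftπ_ε] using πmap_rel (R0.eh_lt (i := i + 2) (j := j + 1) (by omega))
  | @eh_eq i h =>
    obtain ⟨i, rfl⟩ : ∃ m, i = m + 1 := ⟨i - 1, by omega⟩
    simpa [shiftπ_η, shiftπ_ε] using πmap_rel (R0.eh_eq (i := i + 2) (by omega))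
  | eh_succ i =>
    simpa [shiftπ_η, shiftπ_ε] using πmap_rel (R0.eh_succ (i + 1))
  | eh_zero =>
    have h1 := πmap_rel (R0.eh_eq (i := 1) (by omega))
    have h2 := πmap_rel (R0.eh_succ 0)
    have h3 := πmap_rel R0.eh_zero
    simp only [map_mul, map_one, shiftπ_η, shiftπ_ε] at *
    exact h1.trans (h2.trans h3)

/-- The shift endomorphism of `F0`. -/
def shiftF0 : F0 →* F0 :=
  (conGen R0).lift shiftπ (Con.conGen_le.2 fun _ _ h => shiftπ_rel h)

theorem shiftF0_η (k : ℕ) : shiftF0 (πmap (ηgen k)) = πmap (ηgen (k + 1)) :=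
  shiftπ_η k

theorem shiftF0_ε (k : ℕ) : shiftF0 (πmap (εgen k)) = πmap (εgen (k + 1)) :=
  shiftπ_ε k

theorem F0_induction {P : F0 → Prop} (h1 : P 1) (hη : ∀ k, P (πmap (ηgen k)))
    (hε : ∀ k, P (πmap (εgen k))) (hm : ∀ x y, P x → P y → P (x * y)) (x : F0) : P x := by
  obtain ⟨a, rfl⟩ : ∃ a, πmap a = x := Con.mk'_surjective x
  induction a using FreeMonoid.inductionOn with
  | one => simpa using h1
  | of p =>
    obtain ⟨b, k⟩ := p
    cases b
    · exact hε k
    · exact hη k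
  | mul x y hx hy => rw [map_mul]; exact hm _ _ hx hy

theorem shift_endomorphism_and_identities :
    ∃ f : F0 →* F0,
      (∀ k : ℕ, f (πmap (ηgen k)) = πmap (ηgen (k + 1))) ∧
      (∀ k : ℕ, f (πmap (εgen k)) = πmap (εgen (k + 1))) ∧
      πmap (εgen 0) * πmap (ηgen 0) = 1 ∧
      πmap (εgen 0) * f (πmap (ηgen 0)) = 1 ∧
      πmap (εgen 0) * f (πmap (εgen 0)) = πmap (εgen 0) * πmap (εgen 0) ∧
      (∀ x : F0, πmap (εgen 0) * f (f x) = f x * πmap (εgen 0)) ∧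
      (∀ x : F0, f x * πmap (ηgen 0) = πmap (ηgen 0) * x) := by
  have h0 : πmap (εgen 0) * πmap (ηgen 0) = 1 := by
    simpa using πmap_rel R0.eh_zero
  refine ⟨shiftF0, shiftF0_η, shiftF0_ε, h0, ?_, ?_, ?_, ?_⟩
  · rw [shiftF0_η, ← h0]
    simpa using πmap_rel (R0.eh_succ 0)
  · rw [shiftF0_ε]
    simpa using πmap_rel (R0.ee (i := 0) (j := 1) (by omega))
  · intro x
    induction x using F0_induction with
    | h1 => simp
    | hη k =>
      simpa [shiftF0_η] using πmap_rel (R0.eh_gt (i := 0) (j := k + 2) (by omega))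
    | hε k =>
      simpa [shiftF0_ε] using πmap_rel (R0.ee (i := 0) (j := k + 2) (by omega))
    | hm x y hx hy =>
      rw [map_mul, map_mul, ← mul_assoc, hx, mul_assoc, hy, mul_assoc]
  · intro x
    induction x using F0_induction with
    | h1 => simp
    | hη k =>
      simpa [shiftF0_η] using πmap_rel (R0.hh (i := 0) (j := k + 1) (by omega))
    | hε k =>
      simpa [shiftF0_ε] using πmap_rel (R0.eh_lt (i := k + 1) (j := 0) (by omega))
    | hm x y hx hy =>
      rw [map_mul, mul_assoc, hy, ← mul_assoc, hx, mul_assoc]
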